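/- For any 0 < ε ≤ 1/2 there exist constants C(ε), c(ε) > 0 such that if m ≥ C(ε) n, then with probability at least 1 − 3 exp(−c(ε) m), the uniform lower bound (1/m) Σ_{j=1}^m (a_j^T u)^4 ≥ 3 − ε holds for all unit vectors u ∈ R^n. -/

import Mathlib

open MeasureTheory ProbabilityTheory

noncomputable def stdGaussianMat (m n : ℕ) : Measure (Fin m → Fin n → ℝ) :=
  Measure.pi fun _ => Measure.pi fun _ => gaussianReal 0 1

open scoped ENNReal NNReal

/-- **Tonelli's theorem** for a finite product of functions of separate variables. -/
lemma lintegral_pi_prod_eq_prod {ι : Type*} [Fintype ι] {E : ι → Type*}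
    [∀ i, MeasurableSpace (E i)] (μ : ∀ i, Measure (E i)) [∀ i, IsProbabilityMeasure (μ i)]
    {f : ∀ i, E i → ℝ≥0∞} (hf : ∀ i, Measurable (f i)) :
    ∫⁻ x, ∏ i, f i (x i) ∂Measure.pi μ = ∏ i, ∫⁻ x, f i x ∂μ i := by
  have h := lintegral_prod_eq_prod_lintegral_of_indepFun (μ := Measure.pi μ) Finset.univ
    (fun i x => f i (x i)) (iIndepFun_pi fun i => (hf i).aemeasurable)
    (fun i => (hf i).comp (measurable_pi_apply i))
  rw [h]
  refine Finset.prod_congr rfl fun i _ => ?_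
  exact (measurePreserving_eval μ i).lintegral_comp (hf i)

lemma ofReal_exp_integral_le_lintegral {Ω : Type*} [MeasurableSpace Ω] {P : Measure Ω}
    [IsProbabilityMeasure P] {G : Ω → ℝ} (hG : Integrable G P) :
    ENNReal.ofReal (Real.exp (∫ ω, G ω ∂P)) ≤ ∫⁻ ω, ENNReal.ofReal (Real.exp (G ω)) ∂P := by
  by_cases htop : ∫⁻ ω, ENNReal.ofReal (Real.exp (G ω)) ∂P = ∞
  · simp [htop]
  have hint : Integrable (fun ω => Real.exp (G ω)) P := by
    refine ⟨Real.continuous_exp.comp_aestronglyMeasurable hG.1, ?_⟩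
    rw [hasFiniteIntegral_iff_ofReal (Filter.Eventually.of_forall fun ω => (Real.exp_pos _).le)]
    exact lt_top_iff_ne_top.2 htop
  rw [← ofReal_integral_eq_lintegral_ofReal hint
    (Filter.Eventually.of_forall fun ω => (Real.exp_pos _).le)]
  refine ENNReal.ofReal_le_ofReal ?_
  exact convexOn_exp.map_integral_le Real.continuous_exp.continuousOn isClosed_univ
    (by simp) hG hint

/-- The law of a vector with i.i.d. centred Gaussian coordinates of variance `v`. -/
noncomputable abbrev isoGaussian (ι : Type*) [Fintype ι] (v : ℝ≥0) : Measure (ι → ℝ) :=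
  Measure.pi fun _ => gaussianReal 0 v

section isoGaussian

variable {ι : Type*} [Fintype ι] {v : ℝ≥0}

lemma isoGaussian_map_sum_mul (u : ι → ℝ) :
    (isoGaussian ι v).map (fun a => ∑ i, a i * u i)
      = gaussianReal 0 (v * Real.toNNReal (∑ i, u i ^ 2)) := by
  have hm : Measurable fun a : ι → ℝ => ∑ i, a i * u i := by fun_prop
  have := Measure.isProbabilityMeasure_map (μ := isoGaussian ι v) hm.aemeasurable
  refine Measure.ext_of_charFun ?_
  ext t
  rw [charFun_apply_real, integral_map hm.aemeasurable (by fun_prop), charFun_gaussianReal]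
  have h : ∀ a : ι → ℝ, Complex.exp (t * ((∑ i, a i * u i : ℝ) : ℂ) * Complex.I)
      = ∏ i, Complex.exp (((t * u i : ℝ) : ℂ) * (a i) * Complex.I) := by
    intro a
    rw [← Complex.exp_sum]
    congr 1
    push_cast
    rw [Finset.mul_sum, Finset.sum_mul]
    exact Finset.sum_congr rfl fun i _ => by ring
  simp_rw [h]
  rw [integral_fintype_prod_eq_prod
    (f := fun i (x : ℝ) => Complex.exp (((t * u i : ℝ) : ℂ) * x * Complex.I))]
  simp_rw [← charFun_apply_real, charFun_gaussianReal]
  rw [← Complex.exp_sum]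
  congr 1
  have h0 : (0 : ℝ) ≤ ∑ i, u i ^ 2 := Finset.sum_nonneg fun i _ => sq_nonneg _
  have h1 : (((v * Real.toNNReal (∑ i, u i ^ 2) : ℝ≥0) : ℝ) : ℂ)
      = v * ∑ i, (u i : ℂ) ^ 2 := by
    rw [NNReal.coe_mul, Real.coe_toNNReal _ h0]
    push_cast
    rfl
  rw [h1, Finset.sum_sub_distrib]
  simp only [Complex.ofReal_zero, mul_zero, zero_mul, Finset.sum_const_zero, zero_sub]
  rw [Finset.mul_sum, Finset.sum_mul, Finset.sum_div, neg_inj]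
  exact Finset.sum_congr rfl fun i _ => by push_cast; ring

lemma integrable_sq_gaussianReal (w : ℝ≥0) : Integrable (fun x => x ^ 2) (gaussianReal 0 w) :=
  (memLp_id_gaussianReal 2).integrable_sq

lemma integral_sq_gaussianReal (w : ℝ≥0) : ∫ x, x ^ 2 ∂gaussianReal 0 w = w := by
  have h := variance_eq_integral (μ := gaussianReal 0 w) (X := fun x : ℝ => x) (by fun_prop)
  rw [variance_fun_id_gaussianReal, integral_id_gaussianReal] at h
  simpa using h.symm

lemma integrable_sum_mul_isoGaussian (u : ι → ℝ) :
    Integrable (fun a => ∑ i, a i * u i) (isoGaussian ι v) := by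
  have h : Integrable (fun x : ℝ => x) ((isoGaussian ι v).map fun a => ∑ i, a i * u i) := by
    rw [isoGaussian_map_sum_mul]
    exact (memLp_id_gaussianReal 1).integrable le_rfl
  exact h.comp_measurable (by fun_prop)

lemma integral_sum_mul_isoGaussian (u : ι → ℝ) :
    ∫ a, ∑ i, a i * u i ∂isoGaussian ι v = 0 := by
  have h := integral_map (μ := isoGaussian ι v) (φ := fun a => ∑ i, a i * u i)
    (f := fun x : ℝ => x) (Measurable.aemeasurable (by fun_prop)) (by fun_prop)
  rw [← h, isoGaussian_map_sum_mul, integral_id_gaussianReal]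

lemma integrable_sum_mul_sq_isoGaussian (u : ι → ℝ) :
    Integrable (fun a => (∑ i, a i * u i) ^ 2) (isoGaussian ι v) := by
  have h : Integrable (fun x : ℝ => x ^ 2) ((isoGaussian ι v).map fun a => ∑ i, a i * u i) := by
    rw [isoGaussian_map_sum_mul]
    exact integrable_sq_gaussianReal _
  exact h.comp_measurable (by fun_prop)

lemma integral_sum_mul_sq_isoGaussian (u : ι → ℝ) :
    ∫ a, (∑ i, a i * u i) ^ 2 ∂isoGaussian ι v = v * ∑ i, u i ^ 2 := by
  have h := integral_map (μ := isoGaussian ι v) (φ := fun a => ∑ i, a i * u i)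
    (f := fun x : ℝ => x ^ 2) (Measurable.aemeasurable (by fun_prop)) (by fun_prop)
  rw [← h, isoGaussian_map_sum_mul, integral_sq_gaussianReal, NNReal.coe_mul,
    Real.coe_toNNReal _ (Finset.sum_nonneg fun i _ => sq_nonneg _)]

lemma integrable_eval_sq_isoGaussian (i : ι) :
    Integrable (fun a => a i ^ 2) (isoGaussian ι v) :=
  (measurePreserving_eval (fun _ : ι => gaussianReal 0 v) i).integrable_comp_of_integrable
    (integrable_sq_gaussianReal v)

lemma integral_eval_sq_isoGaussian (i : ι) : ∫ a, a i ^ 2 ∂isoGaussian ι v = v := by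
  have h := integral_map (μ := isoGaussian ι v) (φ := fun a => a i)
    (f := fun x : ℝ => x ^ 2) (Measurable.aemeasurable (by fun_prop)) (by fun_prop)
  rw [← h, ← integral_sq_gaussianReal v]
  congr 1
  exact (measurePreserving_eval (fun _ : ι => gaussianReal 0 v) i).map_eq

end isoGaussian

/-- The Cameron–Martin formula on the real line. -/
lemma lintegral_gaussianReal_add {v : ℝ≥0} (hv : v ≠ 0) (u : ℝ) {F : ℝ → ℝ≥0∞}
    (hF : Measurable F) :
    ∫⁻ x, F x ∂gaussianReal 0 v
      = ∫⁻ x, ENNReal.ofReal (Real.exp (-(u * x + u ^ 2 / 2) / v)) * F (x + u)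
          ∂gaussianReal 0 v := by
  rw [gaussianReal_of_var_ne_zero _ hv,
    lintegral_withDensity_eq_lintegral_mul _ (measurable_gaussianPDF 0 v) hF,
    lintegral_withDensity_eq_lintegral_mul _ (measurable_gaussianPDF 0 v) (by fun_prop),
    ← lintegral_add_right_eq_self _ u]
  refine lintegral_congr fun x => ?_
  have hv' : (v : ℝ) ≠ 0 := by exact_mod_cast hv
  simp only [Pi.mul_apply, gaussianPDF, gaussianPDFReal]
  rw [← mul_assoc, ← ENNReal.ofReal_mul (by positivity), mul_assoc (_⁻¹), ← Real.exp_add]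
  congr 5
  field_simp
  ring

section isoGaussian

variable {ι : Type*} [Fintype ι] {v : ℝ≥0}

/-- The Cameron–Martin formula for `isoGaussian`, as an equality of measures. -/
lemma isoGaussian_withDensity_map_add (hv : v ≠ 0) (u : ι → ℝ) :
    ((isoGaussian ι v).withDensity fun w =>
        ∏ i, ENNReal.ofReal (Real.exp (-(u i * w i + u i ^ 2 / 2) / v))).map (fun w => w + u)
      = isoGaussian ι v := by
  symm
  refine Measure.pi_eq fun A hA => ?_
  have hmap : Measurable fun w : ι → ℝ => w + u := by fun_prop
  rw [Measure.map_apply hmap (MeasurableSet.univ_pi hA),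
    withDensity_apply _ (hmap (MeasurableSet.univ_pi hA)),
    ← lintegral_indicator (hmap (MeasurableSet.univ_pi hA))]
  have h : ∀ w : ι → ℝ, ((fun w => w + u) ⁻¹' Set.univ.pi A).indicator (fun w =>
        ∏ i, ENNReal.ofReal (Real.exp (-(u i * w i + u i ^ 2 / 2) / v))) w
      = ∏ i, ENNReal.ofReal (Real.exp (-(u i * w i + u i ^ 2 / 2) / v)) *
          (A i).indicator 1 (w i + u i) := by
    intro w
    classical
    rw [Finset.prod_mul_distrib, Set.indicator_apply]
    split_ifs with hw
    · rw [Finset.prod_eq_one (f := fun i => (A i).indicator 1 (w i + u i)), mul_one]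
      intro i _
      exact Set.indicator_of_mem (hw i trivial) _
    · have : ∃ i, w i + u i ∉ A i := by
        by_contra! hcon
        exact hw fun i _ => hcon i
      obtain ⟨i, hi⟩ := this
      rw [Finset.prod_eq_zero (i := i) (f := fun i => (A i).indicator 1 (w i + u i))
        (Finset.mem_univ i) (Set.indicator_of_notMem hi _), mul_zero]
  simp_rw [h]
  have hA1 : ∀ i, Measurable ((A i).indicator (1 : ℝ → ℝ≥0∞)) := fun i =>
    measurable_one.indicator (hA i)
  rw [lintegral_pi_prod_eq_prod (fun _ : ι => gaussianReal 0 v)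
    (f := fun i (x : ℝ) => ENNReal.ofReal (Real.exp (-(u i * x + u i ^ 2 / 2) / v)) *
          (A i).indicator 1 (x + u i))]
  · refine Finset.prod_congr rfl fun i _ => ?_
    rw [← lintegral_gaussianReal_add hv (u i) (hA1 i), lintegral_indicator_one (hA i)]
  · intro i
    exact (by fun_prop : Measurable _).mul ((hA1 i).comp (by fun_prop))

/-- The Donsker–Varadhan lower bound for the Gaussian prior `isoGaussian ι v` and the posterior
obtained from it by translation by `u`. -/
lemma ofReal_exp_le_lintegral_isoGaussian (hv : v ≠ 0) (u : ι → ℝ) {H G : (ι → ℝ) → ℝ}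
    (hH : Measurable H) (hG : Integrable G (isoGaussian ι v)) (hGH : ∀ w, G w ≤ H (w + u)) :
    ENNReal.ofReal (Real.exp (∫ w, G w ∂isoGaussian ι v - (∑ i, u i ^ 2) / (2 * v)))
      ≤ ∫⁻ w, ENNReal.ofReal (Real.exp (H w)) ∂isoGaussian ι v := by
  have hv' : (v : ℝ) ≠ 0 := by exact_mod_cast hv
  have hint : Integrable (fun w => ∑ i, w i * u i) (isoGaussian ι v) :=
    integrable_sum_mul_isoGaussian u
  calc ENNReal.ofReal (Real.exp (∫ w, G w ∂isoGaussian ι v - (∑ i, u i ^ 2) / (2 * v)))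
      = ENNReal.ofReal (Real.exp (∫ w, (G w - (∑ i, w i * u i) / v
          - (∑ i, u i ^ 2) / (2 * v)) ∂isoGaussian ι v)) := by
        rw [integral_sub (f := fun w => G w - (∑ i, w i * u i) / (v : ℝ))
            (hG.sub (hint.div_const _)) (integrable_const _),
          integral_sub hG (hint.div_const _), integral_div, integral_sum_mul_isoGaussian]
        simp
    _ ≤ ∫⁻ w, ENNReal.ofReal (Real.exp (G w - (∑ i, w i * u i) / v
          - (∑ i, u i ^ 2) / (2 * v))) ∂isoGaussian ι v :=
        ofReal_exp_integral_le_lintegral ((hG.sub (hint.div_const _)).sub (integrable_const _))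
    _ ≤ ∫⁻ w, (∏ i, ENNReal.ofReal (Real.exp (-(u i * w i + u i ^ 2 / 2) / v))) *
          ENNReal.ofReal (Real.exp (H (w + u))) ∂isoGaussian ι v := by
        refine lintegral_mono fun w => ?_
        rw [← ENNReal.ofReal_prod_of_nonneg fun i _ => (Real.exp_pos _).le, ← Real.exp_sum,
          ← ENNReal.ofReal_mul (Real.exp_pos _).le, ← Real.exp_add]
        refine ENNReal.ofReal_le_ofReal (Real.exp_le_exp.2 ?_)
        have : ∑ i, -(u i * w i + u i ^ 2 / 2) / (v : ℝ)
            = -((∑ i, w i * u i) / v) - (∑ i, u i ^ 2) / (2 * v) := by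
          rw [Finset.sum_div, Finset.sum_div, ← Finset.sum_neg_distrib, ← Finset.sum_sub_distrib]
          refine Finset.sum_congr rfl fun i _ => ?_
          field_simp
          ring
        rw [this]
        linarith [hGH w]
    _ = ∫⁻ w, ENNReal.ofReal (Real.exp (H w)) ∂isoGaussian ι v := by
        conv_rhs => rw [← isoGaussian_withDensity_map_add hv u]
        rw [lintegral_map (by fun_prop) (by fun_prop),
          lintegral_withDensity_eq_lintegral_mul _
            (Finset.measurable_prod _ fun i _ => by fun_prop) (by fun_prop)]
        rfl

end isoGaussian

lemma integral_pow_four_gaussianReal : ∫ x, x ^ 4 ∂gaussianReal 0 1 = 3 := by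
  have h := iteratedDeriv_mgf_zero (X := fun x : ℝ => x) (μ := gaussianReal 0 1)
    (by simp) 4
  have hmgf : mgf (fun x : ℝ => x) (gaussianReal 0 1) = fun t => Real.exp (t ^ 2 / 2) := by
    rw [mgf_fun_id_gaussianReal]
    simp
  have hd : ∀ p p' : ℝ → ℝ, (∀ t, HasDerivAt p (p' t) t) →
      deriv (fun t => p t * Real.exp (t ^ 2 / 2))
        = fun t => (p' t + p t * t) * Real.exp (t ^ 2 / 2) := by
    intro p p' hp
    ext t
    have h2 : HasDerivAt (fun t : ℝ => t ^ 2 / 2) t t := by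
      simpa using (hasDerivAt_pow 2 t).div_const 2
    rw [((hp t).fun_mul h2.exp).deriv]
    ring
  have h0 := hd (fun _ => 1) (fun _ => 0) fun t => hasDerivAt_const t 1
  have h1 := hd (fun t => t) (fun _ => 1) fun t => hasDerivAt_id t
  have h2 := hd (fun t => 1 + t ^ 2) (fun t => 2 * t) fun t => by
    simpa using (hasDerivAt_pow 2 t).const_add 1
  have h3 := hd (fun t => 3 * t + t ^ 3) (fun t => 3 + 3 * t ^ 2) fun t => by
    simpa using ((hasDerivAt_id t).const_mul 3).fun_add (hasDerivAt_pow 3 t)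
  rw [hmgf] at h
  have e0 : deriv (fun t : ℝ => Real.exp (t ^ 2 / 2)) = fun t => t * Real.exp (t ^ 2 / 2) := by
    simpa using h0
  have e1 : deriv (fun t : ℝ => t * Real.exp (t ^ 2 / 2))
      = fun t => (1 + t ^ 2) * Real.exp (t ^ 2 / 2) := by
    rw [h1]
    ext t
    ring
  have e2 : deriv (fun t : ℝ => (1 + t ^ 2) * Real.exp (t ^ 2 / 2))
      = fun t => (3 * t + t ^ 3) * Real.exp (t ^ 2 / 2) := by
    rw [h2]
    ext t
    ring
  rw [iteratedDeriv_succ', iteratedDeriv_succ', iteratedDeriv_succ', iteratedDeriv_one, e0, e1,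
    e2, h3] at h
  simpa using h.symm

/-- Bounded Lipschitz minorants of `x ↦ x ^ 4` with almost full Gaussian mean. -/
lemma exists_lipschitz_le_pow_four {δ : ℝ} (hδ : 0 < δ) :
    ∃ (f : ℝ → ℝ) (L B : ℝ), 0 < L ∧ 0 < B ∧ Continuous f ∧ (∀ x, f x ∈ Set.Icc 0 B) ∧
      (∀ x, f x ≤ x ^ 4) ∧ (∀ x y, f x - f y ≤ L * |x - y|) ∧
      3 - δ ≤ ∫ x, f x ∂gaussianReal 0 1 := by
  have hlim : Filter.Tendsto (fun k : ℕ => ∫ x, (min |x| (k : ℝ)) ^ 4 ∂gaussianReal 0 1)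
      Filter.atTop (nhds 3) := by
    rw [← integral_pow_four_gaussianReal]
    refine tendsto_integral_of_dominated_convergence (fun x => x ^ 4)
      (fun k => Continuous.aestronglyMeasurable (by fun_prop)) ?_ (fun k => ?_) ?_
    · have h := (memLp_id_gaussianReal (μ := 0) (v := 1) 4).integrable_norm_pow (by norm_num)
      refine h.congr (Filter.Eventually.of_forall fun x => ?_)
      simp [(by decide : Even 4).pow_abs x]
    · refine Filter.Eventually.of_forall fun x => ?_
      have h0 : 0 ≤ min |x| (k : ℝ) := le_min (abs_nonneg _) (Nat.cast_nonneg _)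
      rw [Real.norm_of_nonneg (pow_nonneg h0 4), ← (by decide : Even 4).pow_abs x]
      exact pow_le_pow_left₀ h0 (min_le_left _ _) 4
    · refine Filter.Eventually.of_forall fun x => ?_
      refine tendsto_const_nhds.congr' ?_
      filter_upwards [Filter.eventually_ge_atTop ⌈|x|⌉₊] with k hk
      rw [min_eq_left (Nat.ceil_le.1 hk), (by decide : Even 4).pow_abs x]
  obtain ⟨k, hk, hk1⟩ := ((hlim.eventually_const_lt (sub_lt_self 3 hδ)).and
    (Filter.eventually_ge_atTop 1)).exists
  have hk0 : (0 : ℝ) < k := by exact_mod_cast hk1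
  have hmin : ∀ x : ℝ, 0 ≤ min |x| (k : ℝ) := fun x => le_min (abs_nonneg _) hk0.le
  refine ⟨fun x => (min |x| (k : ℝ)) ^ 4, 4 * (k : ℝ) ^ 3, (k : ℝ) ^ 4, by positivity,
    by positivity, by fun_prop, fun x => ⟨pow_nonneg (hmin x) 4,
      pow_le_pow_left₀ (hmin x) (min_le_right _ _) 4⟩, fun x => ?_, fun x y => ?_, hk.le⟩
  · rw [← (by decide : Even 4).pow_abs x]
    exact pow_le_pow_left₀ (hmin x) (min_le_left _ _) 4
  · have hx := hmin x
    have hy := hmin y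
    have hxk : min |x| (k : ℝ) ≤ k := min_le_right _ _
    have hyk : min |y| (k : ℝ) ≤ k := min_le_right _ _
    have hxy : |min |x| (k : ℝ) - min |y| (k : ℝ)| ≤ |x - y| := by
      refine (abs_min_sub_min_le_max |x| (k : ℝ) |y| (k : ℝ)).trans ?_
      simpa using abs_abs_sub_abs_le_abs_sub x y
    set p := min |x| (k : ℝ)
    set q := min |y| (k : ℝ)
    calc p ^ 4 - q ^ 4 = (p - q) * ((p + q) * (p ^ 2 + q ^ 2)) := by ring
      _ ≤ |x - y| * ((p + q) * (p ^ 2 + q ^ 2)) :=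
          mul_le_mul_of_nonneg_right ((le_abs_self _).trans hxy) (by positivity)
      _ ≤ |x - y| * ((k + k) * ((k : ℝ) ^ 2 + (k : ℝ) ^ 2)) := by gcongr
      _ = 4 * (k : ℝ) ^ 3 * |x - y| := by ring

lemma lintegral_exp_sq_gaussianReal_le :
    ∫⁻ x, ENNReal.ofReal (Real.exp (x ^ 2 / 4)) ∂gaussianReal 0 1
      ≤ ENNReal.ofReal (Real.exp (1 / 2)) := by
  rw [gaussianReal_of_var_ne_zero _ one_ne_zero,
    lintegral_withDensity_eq_lintegral_mul _ (measurable_gaussianPDF 0 1) (by fun_prop)]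
  have h : ∀ x : ℝ, (gaussianPDF 0 1 * fun x => ENNReal.ofReal (Real.exp (x ^ 2 / 4))) x
      = ENNReal.ofReal ((√(2 * Real.pi))⁻¹ * Real.exp (-(1 / 4) * x ^ 2)) := by
    intro x
    simp only [Pi.mul_apply, gaussianPDF, gaussianPDFReal]
    rw [← ENNReal.ofReal_mul (by positivity), mul_assoc, ← Real.exp_add]
    congr 3
    · simp
    · simp
      ring
  simp_rw [h]
  rw [← ofReal_integral_eq_lintegral_ofReal
    ((integrable_exp_neg_mul_sq (by norm_num : (0 : ℝ) < 1 / 4)).const_mul _)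
    (Filter.Eventually.of_forall fun x => by positivity), integral_const_mul, integral_gaussian]
  refine ENNReal.ofReal_le_ofReal ?_
  rw [← Real.sqrt_inv, ← Real.sqrt_mul (by positivity)]
  have h2 : (2 * Real.pi)⁻¹ * (Real.pi / (1 / 4)) = 2 := by
    have := Real.pi_ne_zero
    field_simp
    norm_num
  rw [h2]
  have h3 : √2 ≤ 3 / 2 := Real.sqrt_le_iff.2 (by norm_num)
  linarith [Real.add_one_le_exp (1 / 2 : ℝ)]

instance (m n : ℕ) : IsProbabilityMeasure (stdGaussianMat m n) := by
  unfold stdGaussianMat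
  infer_instance

/-- The squared entries of an `m × n` standard Gaussian matrix rarely sum to more than `4 * m * n`. -/
lemma stdGaussianMat_sum_sq_ge_le (m n : ℕ) :
    stdGaussianMat m n {a | 4 * (n * m : ℝ) ≤ ∑ j, ∑ i, a j i ^ 2}
      ≤ ENNReal.ofReal (Real.exp (-(n * m / 2))) := by
  have hexp : ∫⁻ a, ENNReal.ofReal (Real.exp ((∑ j, ∑ i, a j i ^ 2) / 4)) ∂stdGaussianMat m n
      ≤ ENNReal.ofReal (Real.exp (n * m / 2)) := by
    have h : ∀ a : Fin m → Fin n → ℝ, ENNReal.ofReal (Real.exp ((∑ j, ∑ i, a j i ^ 2) / 4))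
        = ∏ j, ∏ i, ENNReal.ofReal (Real.exp (a j i ^ 2 / 4)) := by
      intro a
      simp_rw [Finset.sum_div, Real.exp_sum]
      rw [ENNReal.ofReal_prod_of_nonneg fun j _ => by positivity]
      refine Finset.prod_congr rfl fun j _ => ?_
      rw [ENNReal.ofReal_prod_of_nonneg fun i _ => by positivity]
    simp_rw [h]
    rw [stdGaussianMat, lintegral_pi_prod_eq_prod
      (f := fun _ (b : Fin n → ℝ) => ∏ i, ENNReal.ofReal (Real.exp (b i ^ 2 / 4))) _
      fun _ => Finset.measurable_prod _ fun i _ => by fun_prop,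
      lintegral_pi_prod_eq_prod
      (f := fun (_ : Fin n) (x : ℝ) => ENNReal.ofReal (Real.exp (x ^ 2 / 4))) _
      fun _ => by fun_prop]
    simp only [Finset.prod_const, Finset.card_univ, Fintype.card_fin]
    rw [← pow_mul]
    refine (pow_le_pow_left' lintegral_exp_sq_gaussianReal_le _).trans_eq ?_
    rw [← ENNReal.ofReal_pow (Real.exp_pos _).le, ← Real.exp_nat_mul]
    congr 2
    push_cast
    ring
  have hpos : ENNReal.ofReal (Real.exp (n * m)) ≠ 0 := by
    simpa using Real.exp_pos _
  calc stdGaussianMat m n {a | 4 * (n * m : ℝ) ≤ ∑ j, ∑ i, a j i ^ 2}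
      ≤ stdGaussianMat m n {a | ENNReal.ofReal (Real.exp (n * m))
          ≤ ENNReal.ofReal (Real.exp ((∑ j, ∑ i, a j i ^ 2) / 4))} := by
        refine measure_mono fun a ha => ENNReal.ofReal_le_ofReal (Real.exp_le_exp.2 ?_)
        have := ha.out
        linarith
    _ ≤ (∫⁻ a, ENNReal.ofReal (Real.exp ((∑ j, ∑ i, a j i ^ 2) / 4)) ∂stdGaussianMat m n)
          / ENNReal.ofReal (Real.exp (n * m)) :=
        meas_ge_le_lintegral_div (Measurable.aemeasurable (by fun_prop)) hpos
          ENNReal.ofReal_ne_top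
    _ ≤ ENNReal.ofReal (Real.exp (n * m / 2)) / ENNReal.ofReal (Real.exp (n * m)) := by
        gcongr
    _ = ENNReal.ofReal (Real.exp (-(n * m / 2))) := by
        rw [← ENNReal.ofReal_div_of_pos (Real.exp_pos _), ← Real.exp_sub]
        congr 2
        ring

/-- Hoeffding's lemma for the lower tail of a random variable with values in `[0, B]`. -/
lemma lintegral_exp_integral_sub_le_one {Ω : Type*} [MeasurableSpace Ω] {P : Measure Ω}
    [IsProbabilityMeasure P] {Y : Ω → ℝ} (hY : Measurable Y) {B : ℝ}
    (hYB : ∀ ω, Y ω ∈ Set.Icc 0 B) (l : ℝ) :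
    ∫⁻ ω, ENNReal.ofReal (Real.exp (l * (∫ ω', Y ω' ∂P - Y ω) - l ^ 2 * B ^ 2 / 2)) ∂P ≤ 1 := by
  have h := hasSubgaussianMGF_of_mem_Icc (μ := P) hY.aemeasurable (Filter.Eventually.of_forall hYB)
  have hle := h.mgf_le (-l)
  have hc : (((‖B - 0‖₊ / 2) ^ 2 : ℝ≥0) : ℝ) = B ^ 2 / 4 := by
    push_cast
    rw [sub_zero, div_pow, Real.norm_eq_abs, sq_abs]
    norm_num
  rw [hc] at hle
  have hexp : ∀ ω, Real.exp (l * (∫ ω', Y ω' ∂P - Y ω) - l ^ 2 * B ^ 2 / 2)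
      = Real.exp (-(l ^ 2 * B ^ 2 / 2)) * Real.exp (-l * (Y ω - ∫ ω', Y ω' ∂P)) := by
    intro ω
    rw [← Real.exp_add]
    congr 1
    ring
  simp_rw [hexp]
  rw [← ofReal_integral_eq_lintegral_ofReal ((h.integrable_exp_mul (-l)).const_mul _)
    (Filter.Eventually.of_forall fun ω => by positivity), integral_const_mul]
  refine ENNReal.ofReal_le_one.2 ?_
  calc Real.exp (-(l ^ 2 * B ^ 2 / 2)) * ∫ ω, Real.exp (-l * (Y ω - ∫ ω', Y ω' ∂P)) ∂P
      ≤ Real.exp (-(l ^ 2 * B ^ 2 / 2)) * Real.exp (B ^ 2 / 4 * (-l) ^ 2 / 2) := by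
        gcongr
        exact hle
    _ ≤ 1 := by
        rw [← Real.exp_add, Real.exp_le_one_iff]
        nlinarith [sq_nonneg (l * B)]

/-- The mean of `f (⟪b, w⟫)` for a standard Gaussian vector `b`. -/
noncomputable def gaussianMean {n : ℕ} (f : ℝ → ℝ) (w : Fin n → ℝ) : ℝ :=
  ∫ b, f (∑ i, b i * w i) ∂isoGaussian (Fin n) 1

/-- The exponent of the Gibbs weight comparing the empirical mean of `f (⟪a j, w⟫)` with
its expectation, at inverse temperature `l`. -/
noncomputable def gibbsExponent {m n : ℕ} (f : ℝ → ℝ) (l B : ℝ) (a : Fin m → Fin n → ℝ)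
    (w : Fin n → ℝ) : ℝ :=
  ∑ j, (l * (gaussianMean f w - f (∑ i, a j i * w i)) - l ^ 2 * B ^ 2 / 2)

section Gibbs

variable {m n : ℕ} {f : ℝ → ℝ} {B : ℝ}

lemma measurable_gaussianMean (hf : Continuous f) :
    Measurable (gaussianMean f : (Fin n → ℝ) → ℝ) := by
  have h : Measurable fun p : (Fin n → ℝ) × (Fin n → ℝ) => f (∑ i, p.2 i * p.1 i) := by
    fun_prop
  exact (h.stronglyMeasurable.integral_prod_right' (ν := isoGaussian (Fin n) 1)).measurable

lemma measurable_gibbsExponent (hf : Continuous f) (l : ℝ) :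
    Measurable fun p : (Fin m → Fin n → ℝ) × (Fin n → ℝ) => gibbsExponent f l B p.1 p.2 := by
  have h : Measurable fun p : (Fin m → Fin n → ℝ) × (Fin n → ℝ) => gaussianMean f p.2 :=
    (measurable_gaussianMean hf).comp measurable_snd
  unfold gibbsExponent
  fun_prop

lemma lintegral_exp_gibbsExponent_le_one (hf : Continuous f) (hfB : ∀ x, f x ∈ Set.Icc 0 B)
    (l : ℝ) (w : Fin n → ℝ) :
    ∫⁻ a, ENNReal.ofReal (Real.exp (gibbsExponent f l B a w)) ∂stdGaussianMat m n ≤ 1 := by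
  have h : ∀ a : Fin m → Fin n → ℝ, ENNReal.ofReal (Real.exp (gibbsExponent f l B a w))
      = ∏ j, ENNReal.ofReal (Real.exp
          (l * (gaussianMean f w - f (∑ i, a j i * w i)) - l ^ 2 * B ^ 2 / 2)) := by
    intro a
    rw [gibbsExponent, Real.exp_sum, ENNReal.ofReal_prod_of_nonneg fun j _ => by positivity]
  simp_rw [h]
  rw [stdGaussianMat, lintegral_pi_prod_eq_prod
    (f := fun _ (b : Fin n → ℝ) => ENNReal.ofReal (Real.exp
      (l * (gaussianMean f w - f (∑ i, b i * w i)) - l ^ 2 * B ^ 2 / 2))) _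
    fun _ => by fun_prop]
  refine Finset.prod_le_one' fun j _ => ?_
  exact lintegral_exp_integral_sub_le_one (P := isoGaussian (Fin n) 1)
    (Y := fun b => f (∑ i, b i * w i)) (by fun_prop) (fun b => hfB _) l

lemma stdGaussianMat_gibbs_ge_le (hf : Continuous f) (hfB : ∀ x, f x ∈ Set.Icc 0 B)
    (l τ : ℝ) (v : ℝ≥0) :
    stdGaussianMat m n {a | ENNReal.ofReal (Real.exp (τ * m))
        ≤ ∫⁻ w, ENNReal.ofReal (Real.exp (gibbsExponent f l B a w)) ∂isoGaussian (Fin n) v}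
      ≤ ENNReal.ofReal (Real.exp (-(τ * m))) := by
  have hmeas : Measurable fun p : (Fin m → Fin n → ℝ) × (Fin n → ℝ) =>
      ENNReal.ofReal (Real.exp (gibbsExponent f l B p.1 p.2)) :=
    (Real.measurable_exp.comp (measurable_gibbsExponent hf l)).ennreal_ofReal
  have hle : ∫⁻ a, ∫⁻ w, ENNReal.ofReal (Real.exp (gibbsExponent f l B a w))
      ∂isoGaussian (Fin n) v ∂stdGaussianMat m n ≤ 1 := by
    rw [lintegral_lintegral_swap hmeas.aemeasurable]
    refine (lintegral_mono fun w => lintegral_exp_gibbsExponent_le_one hf hfB l w).trans_eq ?_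
    simp
  refine (meas_ge_le_lintegral_div hmeas.lintegral_prod_right'.aemeasurable
    (by simpa using Real.exp_pos _) ENNReal.ofReal_ne_top).trans ?_
  refine (ENNReal.div_le_div_right hle _).trans_eq ?_
  rw [one_div, ← ENNReal.ofReal_inv_of_pos (Real.exp_pos _), Real.exp_neg]

variable {L r : ℝ}

lemma integrable_comp_sum_mul (hf : Continuous f) (hfB : ∀ x, f x ∈ Set.Icc 0 B)
    (w : Fin n → ℝ) :
    Integrable (fun b => f (∑ i, b i * w i)) (isoGaussian (Fin n) 1) :=
  Integrable.of_mem_Icc 0 B (Measurable.aemeasurable (by fun_prop))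
    (Filter.Eventually.of_forall fun _ => hfB _)

lemma sub_le_of_lipschitz (hL : 0 ≤ L) (hr : 0 < r) (hfL : ∀ x y, f x - f y ≤ L * |x - y|)
    (x y : ℝ) : f x - f y ≤ L * (r / 2 + (x - y) ^ 2 / (2 * r)) := by
  refine (hfL x y).trans (mul_le_mul_of_nonneg_left ?_ hL)
  rw [← sq_abs (x - y), div_add_div _ _ two_ne_zero (by positivity), le_div_iff₀ (by positivity)]
  nlinarith [sq_nonneg (|x - y| - r)]

lemma gaussianMean_sub_le (hf : Continuous f) (hfB : ∀ x, f x ∈ Set.Icc 0 B) (hL : 0 ≤ L)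
    (hr : 0 < r) (hfL : ∀ x y, f x - f y ≤ L * |x - y|) (u w : Fin n → ℝ) :
    gaussianMean f u - gaussianMean f (w + u) ≤ L * (r / 2 + (∑ i, w i ^ 2) / (2 * r)) := by
  have hsq := integrable_sum_mul_sq_isoGaussian (v := 1) w
  rw [gaussianMean, gaussianMean, ← integral_sub (integrable_comp_sum_mul hf hfB u)
    (integrable_comp_sum_mul hf hfB (w + u))]
  calc ∫ b, (f (∑ i, b i * u i) - f (∑ i, b i * (w + u) i)) ∂isoGaussian (Fin n) 1
      ≤ ∫ b, L * (r / 2 + (∑ i, b i * w i) ^ 2 / (2 * r)) ∂isoGaussian (Fin n) 1 := by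
        refine integral_mono ((integrable_comp_sum_mul hf hfB u).sub
          (integrable_comp_sum_mul hf hfB (w + u)))
          (((integrable_const _).add (hsq.div_const _)).const_mul _) fun b => ?_
        have h := sub_le_of_lipschitz hL hr hfL (∑ i, b i * u i) (∑ i, b i * (w + u) i)
        have hd : ∑ i, b i * u i - ∑ i, b i * (w + u) i = -∑ i, b i * w i := by
          simp only [Pi.add_apply, mul_add, Finset.sum_add_distrib]
          ring
        rwa [hd, neg_sq] at h
    _ = L * (r / 2 + (∑ i, w i ^ 2) / (2 * r)) := by
        rw [integral_const_mul, integral_add (integrable_const _) (hsq.div_const _),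
          integral_div (2 * r) fun b : Fin n → ℝ => (∑ i, b i * w i) ^ 2,
          integral_sum_mul_sq_isoGaussian]
        simp

/-- Smoothing over a Gaussian neighbourhood: a lower bound on the empirical mean of `f (⟪a j, u⟫)`
valid for all unit vectors `u` as soon as the partition function is small. -/
lemma le_sum_of_lintegral_gibbs_lt (hf : Continuous f) (hfB : ∀ x, f x ∈ Set.Icc 0 B)
    (hL : 0 ≤ L) (hr : 0 < r) (hfL : ∀ x y, f x - f y ≤ L * |x - y|) {l : ℝ} (hl : 0 < l)
    {v : ℝ≥0} (hv : v ≠ 0) (hvr : n * (v : ℝ) = r ^ 2) {τ : ℝ} {a : Fin m → Fin n → ℝ}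
    (ha : ∫⁻ w, ENNReal.ofReal (Real.exp (gibbsExponent f l B a w)) ∂isoGaussian (Fin n) v
      < ENNReal.ofReal (Real.exp (τ * m)))
    (ha2 : ∑ j, ∑ i, a j i ^ 2 < 4 * (n * m : ℝ)) {u : Fin n → ℝ} (hu : ∑ i, u i ^ 2 = 1) :
    l * (m * gaussianMean f u - ∑ j, f (∑ i, a j i * u i))
      ≤ m * (l ^ 2 * B ^ 2 / 2 + 7 / 2 * l * L * r + τ) + n / (2 * r ^ 2) := by
  have hQ : Integrable (fun w : Fin n → ℝ => ∑ i, w i ^ 2) (isoGaussian (Fin n) v) :=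
    integrable_finsetSum _ fun i _ => integrable_eval_sq_isoGaussian i
  have hA : ∀ j, Integrable (fun w : Fin n → ℝ => (∑ i, w i * a j i) ^ 2)
      (isoGaussian (Fin n) v) := fun j => integrable_sum_mul_sq_isoGaussian (a j)
  have hv0 : (0 : ℝ) < v := by
    have : (0 : ℝ≥0) < v := pos_iff_ne_zero.2 hv
    exact_mod_cast this
  set G : Fin m → (Fin n → ℝ) → ℝ := fun j w =>
    (l * (gaussianMean f u - f (∑ i, a j i * u i)) - l ^ 2 * B ^ 2 / 2 - l * L * r)
      - (l * L / (2 * r)) * (∑ i, w i ^ 2 + (∑ i, w i * a j i) ^ 2) with hG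
  have hGint : ∀ j, Integrable (G j) (isoGaussian (Fin n) v) := fun j =>
    (integrable_const _).sub ((hQ.add (hA j)).const_mul _)
  have hGval : ∀ j, ∫ w, G j w ∂isoGaussian (Fin n) v
      = (l * (gaussianMean f u - f (∑ i, a j i * u i)) - l ^ 2 * B ^ 2 / 2 - l * L * r)
        - (l * L / (2 * r)) * (n * v + v * ∑ i, a j i ^ 2) := by
    intro j
    have hQA := (hQ.add (hA j)).const_mul (l * L / (2 * r))
    simp only [Pi.add_apply] at hQA
    simp only [hG]
    rw [integral_sub (integrable_const _) hQA, integral_const_mul,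
      integral_add hQ (hA j), integral_sum_mul_sq_isoGaussian,
      integral_finsetSum _ fun i _ => integrable_eval_sq_isoGaussian i]
    simp [integral_eval_sq_isoGaussian]
  have hle : ∀ w, ∑ j, G j w ≤ gibbsExponent f l B a (w + u) := by
    intro w
    refine Finset.sum_le_sum fun j _ => ?_
    have h1 := gaussianMean_sub_le hf hfB hL hr hfL u w
    have h2 := sub_le_of_lipschitz hL hr hfL (∑ i, a j i * (w + u) i) (∑ i, a j i * u i)
    have hd : ∑ i, a j i * (w + u) i - ∑ i, a j i * u i = ∑ i, w i * a j i := by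
      simp only [Pi.add_apply, mul_add, Finset.sum_add_distrib, mul_comm (w _)]
      ring
    rw [hd] at h2
    have h3 := mul_le_mul_of_nonneg_left (add_le_add h1 h2) hl.le
    have h4 : l * (L * (r / 2 + (∑ i, w i ^ 2) / (2 * r))
        + L * (r / 2 + (∑ i, w i * a j i) ^ 2 / (2 * r)))
        = l * L * r + (l * L / (2 * r)) * (∑ i, w i ^ 2 + (∑ i, w i * a j i) ^ 2) := by
      field_simp
      ring
    rw [h4] at h3
    simp only [hG]
    linarith
  have hlt := (ofReal_exp_le_lintegral_isoGaussian hv u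
    ((measurable_gibbsExponent (B := B) hf l).comp measurable_prodMk_left)
    (integrable_finsetSum _ fun j _ => hGint j) hle).trans_lt ha
  rw [ENNReal.ofReal_lt_ofReal_iff (Real.exp_pos _), Real.exp_lt_exp,
    integral_finsetSum _ fun j _ => hGint j, hu] at hlt
  simp_rw [hGval, Finset.sum_sub_distrib, ← Finset.mul_sum, Finset.sum_add_distrib,
    Finset.sum_sub_distrib, ← Finset.mul_sum] at hlt
  simp only [Finset.sum_const, Finset.card_univ, Fintype.card_fin, nsmul_eq_mul] at hlt
  have hn : 1 / (2 * (v : ℝ)) = n / (2 * r ^ 2) := by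
    have : (n : ℝ) ≠ 0 := by
      rintro h0
      rw [h0, zero_mul] at hvr
      exact (pow_pos hr 2).ne hvr
    rw [← hvr]
    field_simp
  have hS : (v : ℝ) * ∑ j, ∑ i, a j i ^ 2 ≤ 4 * m * r ^ 2 := by
    rw [← hvr]
    calc (v : ℝ) * ∑ j, ∑ i, a j i ^ 2 ≤ v * (4 * (n * m)) :=
          mul_le_mul_of_nonneg_left ha2.le hv0.le
      _ = 4 * m * (n * v) := by ring
  have hS' : l * L / (2 * r) * (m * (n * v) + v * ∑ j, ∑ i, a j i ^ 2)
      ≤ m * (5 / 2 * l * L * r) := by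
    calc l * L / (2 * r) * (m * (n * v) + v * ∑ j, ∑ i, a j i ^ 2)
        ≤ l * L / (2 * r) * (m * r ^ 2 + 4 * m * r ^ 2) := by
          rw [hvr]
          gcongr
      _ = m * (5 / 2 * l * L * r) := by
          field_simp
          ring
  rw [hn] at hlt
  linarith

end Gibbs

lemma gaussianMean_of_unit {n : ℕ} {f : ℝ → ℝ} (hf : Continuous f) {u : Fin n → ℝ}
    (hu : ∑ i, u i ^ 2 = 1) : gaussianMean f u = ∫ x, f x ∂gaussianReal 0 1 := by
  have h := integral_map (μ := isoGaussian (Fin n) 1) (φ := fun a => ∑ i, a i * u i)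
    (f := f) (Measurable.aemeasurable (by fun_prop)) hf.aestronglyMeasurable
  rw [gaussianMean, ← h, isoGaussian_map_sum_mul, hu]
  simp

/-- For any `0 < ε ≤ 1/2` there exist `C(ε), c(ε) > 0` such that if `m ≥ C(ε) n`,
then with probability at least `1 − 3exp(−c(ε)m)`, `(1/m)∑ⱼ(aⱼᵀu)⁴ ≥ 3 − ε` for
all unit vectors `u`. -/
theorem fourth_moment_lower_bound :
    ∀ ε : ℝ, 0 < ε → ε ≤ 1 / 2 → ∃ C > (0 : ℝ), ∃ c > (0 : ℝ), ∀ n m : ℕ,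
      (m : ℝ) ≥ C * n →
      stdGaussianMat m n {a | ∀ u : Fin n → ℝ, ∑ i, (u i) ^ 2 = 1 →
          (1 / (m : ℝ)) * ∑ j, (∑ i, a j i * u i) ^ 4 ≥ 3 - ε}
        ≥ ENNReal.ofReal (1 - 3 * Real.exp (-(c * m))) := by
  intro ε hε _
  obtain ⟨f, L, B, hL, hB, hf, hfB, hf4, hfL, hfε⟩ :=
    exists_lipschitz_le_pow_four (half_pos hε)
  set r : ℝ := ε / (28 * L) with hr_def
  set l : ℝ := ε / (4 * B ^ 2) with hl_def
  set τ : ℝ := l * (ε / 8) with hτ_def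
  have hr : 0 < r := by positivity
  have hl : 0 < l := by positivity
  have hτ : 0 < τ := by positivity
  refine ⟨1 / (2 * r ^ 2 * τ), by positivity, min τ (1 / 2), by positivity, fun n m hm => ?_⟩
  set S := {a : Fin m → Fin n → ℝ | ∀ u : Fin n → ℝ, ∑ i, (u i) ^ 2 = 1 →
          (1 / (m : ℝ)) * ∑ j, (∑ i, a j i * u i) ^ 4 ≥ 3 - ε}
  rcases Nat.eq_zero_or_pos n with rfl | hn
  · have hSu : S = Set.univ := by
      refine Set.eq_univ_of_forall fun a u hu => ?_
      simp at hu
    rw [hSu, measure_univ]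
    refine ENNReal.ofReal_le_one.2 ?_
    linarith [Real.exp_pos (-(min τ (1 / 2) * m))]
  have hn0 : (0 : ℝ) < n := by exact_mod_cast hn
  have hn1 : (1 : ℝ) ≤ n := by exact_mod_cast hn
  have hm0 : (0 : ℝ) < m := lt_of_lt_of_le (by positivity) hm
  have hnm : n / (2 * r ^ 2) ≤ m * τ := by
    calc (n : ℝ) / (2 * r ^ 2) = (1 / (2 * r ^ 2 * τ) * n) * τ := by field_simp
      _ ≤ m * τ := mul_le_mul_of_nonneg_right hm hτ.le
  set v : ℝ≥0 := ⟨r ^ 2 / n, by positivity⟩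
  have hv_coe : (v : ℝ) = r ^ 2 / n := rfl
  have hv : v ≠ 0 := by
    have : (v : ℝ) ≠ 0 := by rw [hv_coe]; positivity
    exact_mod_cast this
  have hvr : n * (v : ℝ) = r ^ 2 := by
    rw [hv_coe]
    field_simp
  set E₁ := {a : Fin m → Fin n → ℝ | ENNReal.ofReal (Real.exp (τ * m))
    ≤ ∫⁻ w, ENNReal.ofReal (Real.exp (gibbsExponent f l B a w)) ∂isoGaussian (Fin n) v}
  set E₂ := {a : Fin m → Fin n → ℝ | 4 * (n * m : ℝ) ≤ ∑ j, ∑ i, a j i ^ 2}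
  have hcover : Set.univ ⊆ S ∪ (E₁ ∪ E₂) := by
    intro a _
    by_contra! hcon
    simp only [Set.mem_union, not_or] at hcon
    obtain ⟨haS, ha1, ha2⟩ := hcon
    refine haS fun u hu => ?_
    have h := le_sum_of_lintegral_gibbs_lt hf hfB hL.le hr hfL hl hv hvr
      (not_le.1 ha1) (not_le.1 ha2) hu
    rw [gaussianMean_of_unit hf hu] at h
    have hsum : ∑ j, f (∑ i, a j i * u i) ≤ ∑ j, (∑ i, a j i * u i) ^ 4 :=
      Finset.sum_le_sum fun j _ => hf4 _
    have h1 : l ^ 2 * B ^ 2 / 2 = l * (ε / 8) := by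
      rw [hl_def]
      field_simp
      norm_num
    have h2 : 7 / 2 * l * L * r = l * (ε / 8) := by
      rw [hr_def]
      field_simp
      norm_num
    rw [h1, h2] at h
    rw [hτ_def] at h hnm
    have h3 : l * (m * ∫ x, f x ∂gaussianReal 0 1) - l * ∑ j, f (∑ i, a j i * u i)
        ≤ l * (m * (ε / 2)) := by
      linarith
    have h4 : m * ∫ x, f x ∂gaussianReal 0 1 ≤ m * (ε / 2) + ∑ j, f (∑ i, a j i * u i) := by
      refine le_of_mul_le_mul_left ?_ hl
      linarith
    have h5 := mul_le_mul_of_nonneg_left hfε hm0.le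
    rw [ge_iff_le, one_div, inv_mul_eq_div, le_div_iff₀ hm0]
    linarith
  have hexp : ∀ x : ℝ, min τ (1 / 2) * m ≤ x →
      ENNReal.ofReal (Real.exp (-x)) ≤ ENNReal.ofReal (Real.exp (-(min τ (1 / 2) * m))) :=
    fun x hx => ENNReal.ofReal_le_ofReal (Real.exp_le_exp.2 (neg_le_neg hx))
  have hE₁ : stdGaussianMat m n E₁ ≤ ENNReal.ofReal (Real.exp (-(min τ (1 / 2) * m))) :=
    (stdGaussianMat_gibbs_ge_le hf hfB l τ v).trans
      (hexp _ (mul_le_mul_of_nonneg_right (min_le_left _ _) hm0.le))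
  have hE₂ : stdGaussianMat m n E₂ ≤ ENNReal.ofReal (Real.exp (-(min τ (1 / 2) * m))) := by
    refine (stdGaussianMat_sum_sq_ge_le m n).trans (hexp _ ?_)
    have := mul_le_mul_of_nonneg_right (min_le_right τ (1 / 2)) hm0.le
    nlinarith
  set q := Real.exp (-(min τ (1 / 2) * m))
  have hq0 : 0 < q := Real.exp_pos _
  have hbad : stdGaussianMat m n (E₁ ∪ E₂) ≤ ENNReal.ofReal (3 * q) := by
    refine (measure_union_le _ _).trans ((add_le_add hE₁ hE₂).trans ?_)
    rw [← ENNReal.ofReal_add hq0.le hq0.le]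
    exact ENNReal.ofReal_le_ofReal (by linarith)
  have hone : 1 ≤ stdGaussianMat m n S + stdGaussianMat m n (E₁ ∪ E₂) := by
    rw [← measure_univ (μ := stdGaussianMat m n)]
    exact (measure_mono hcover).trans (measure_union_le _ _)
  rw [ge_iff_le, ENNReal.ofReal_sub _ (by positivity), ENNReal.ofReal_one]
  exact tsub_le_iff_right.2 (hone.trans (add_le_add le_rfl hbad))
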